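/- arXiv:math/0610198 — 2 statements merged into one kernel-verified Lean document; each statement's English description precedes it below -/
import Mathlib

section
/- For all h > 0 and σ > 0, the regularized Shannon kernel δ is twice differentiable at 0 with δ'(0) = 0 and δ''(0) = −(3 + (π²/h²)·σ²)/(3σ²). -/
open Real

/-- The regularized Shannon kernel (RSK) with grid spacing `h` and Gaussian width `σ`. -/
noncomputable def rsk (h σ : ℝ) : ℝ → ℝ := fun y =>
  if y = 0 then 1
  else Real.sin (Real.pi * y / h) / (Real.pi / h * y) * Real.exp (-(y ^ 2) / (2 * σ ^ 2))

/-!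
The kernel is `sinc (π * y / h)` times a Gaussian. Since `sinc` is the difference quotient
`dslope sin 0`, its Taylor coefficients at `0` are those of `sin` shifted by one, which gives
`sinc' 0 = 0` and `sinc'' 0 = -1 / 3`. The first derivatives of both factors vanish at `0`,
so the Leibniz rule has no cross term there and the second derivatives of the factors add up.
-/

open scoped Nat

section Dslope

variable {𝕜 E : Type*} [NontriviallyNormedField 𝕜] [NormedAddCommGroup E] [NormedSpace 𝕜 E]
  {f : 𝕜 → E} {a b : 𝕜}

theorem analyticAt_dslope (hf : AnalyticAt 𝕜 f b) : AnalyticAt 𝕜 (dslope f a) b := by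
  obtain rfl | hne := eq_or_ne b a
  · obtain ⟨p, hp⟩ := hf
    exact ⟨p.fslope, hp.has_fpower_series_dslope_fslope⟩
  · have hslope : AnalyticAt 𝕜 (fun x ↦ (x - a)⁻¹ • (f x - f a)) b :=
      ((analyticAt_id.sub analyticAt_const).inv (sub_ne_zero.2 hne)).smul (hf.sub analyticAt_const)
    exact hslope.congr (dslope_eventuallyEq_slope_of_ne f hne).symm

variable [CompleteSpace E]

theorem iteratedDeriv_eq_factorial_smul_coeff {p : FormalMultilinearSeries 𝕜 𝕜 E}
    (hp : HasFPowerSeriesAt f p a) (n : ℕ) : iteratedDeriv n f a = n ! • p.coeff n := by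
  obtain ⟨r, hr⟩ := hp
  exact (hr.factorial_smul 1 n).symm

theorem succ_smul_iteratedDeriv_dslope_self (hf : AnalyticAt 𝕜 f a) (n : ℕ) :
    (n + 1) • iteratedDeriv n (dslope f a) a = iteratedDeriv (n + 1) f a := by
  obtain ⟨p, hp⟩ := hf
  rw [iteratedDeriv_eq_factorial_smul_coeff hp.has_fpower_series_dslope_fslope,
    iteratedDeriv_eq_factorial_smul_coeff hp, p.coeff_fslope, smul_smul, Nat.factorial_succ]

end Dslope

section SecondDerivative

variable {𝕜 : Type*} [NontriviallyNormedField 𝕜] {x : 𝕜}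

theorem hasDerivAt_deriv_of_contDiffAt_two {E : Type*} [NormedAddCommGroup E] [NormedSpace 𝕜 E]
    {f : 𝕜 → E} (hf : ContDiffAt 𝕜 2 f x) :
    HasDerivAt (deriv f) (iteratedDeriv 2 f x) x := by
  rw [iteratedDeriv_succ, iteratedDeriv_one]
  exact ((hf.derivWithin (m := 1) one_add_one_eq_two.le).differentiableAt one_ne_zero).hasDerivAt

theorem iteratedDeriv_two_fun_mul_of_deriv_eq_zero {𝔸 : Type*} [NormedRing 𝔸]
    [NormedAlgebra 𝕜 𝔸] {f g : 𝕜 → 𝔸} (hf : ContDiffAt 𝕜 2 f x) (hg : ContDiffAt 𝕜 2 g x)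
    (hf' : deriv f x = 0) :
    iteratedDeriv 2 (fun y ↦ f y * g y) x =
      f x * iteratedDeriv 2 g x + iteratedDeriv 2 f x * g x := by
  simp [iteratedDeriv_fun_mul hf hg, Finset.sum_range_succ, hf']

end SecondDerivative

@[fun_prop]
theorem contDiff_sinc {n : WithTop ℕ∞} : ContDiff ℝ n sinc := by
  rw [sinc_eq_dslope]
  exact contDiff_iff_contDiffAt.2 fun _ ↦ (analyticAt_dslope analyticAt_sin).contDiffAt

theorem succ_mul_iteratedDeriv_sinc_zero (n : ℕ) :
    (n + 1) * iteratedDeriv n sinc 0 = iteratedDeriv (n + 1) sin 0 := by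
  simpa [sinc_eq_dslope] using succ_smul_iteratedDeriv_dslope_self (analyticAt_sin (x := 0)) n

theorem deriv_sinc_zero : deriv sinc 0 = 0 := by
  simpa [iteratedDeriv_succ] using succ_mul_iteratedDeriv_sinc_zero 1

theorem iteratedDeriv_two_sinc_zero : iteratedDeriv 2 sinc 0 = -1 / 3 := by
  have h := succ_mul_iteratedDeriv_sinc_zero 2
  have hcos : iteratedDeriv 2 cos 0 = -1 := by simp
  rw [iteratedDeriv_add_one_sin, hcos] at h
  push_cast at h
  linarith

theorem deriv_exp_mul_sq (b : ℝ) :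
    deriv (fun y ↦ exp (b * y ^ 2)) = fun y ↦ 2 * b * y * exp (b * y ^ 2) := by
  ext y
  have hsq : HasDerivAt (fun y ↦ b * y ^ 2) (b * (2 * y)) y := by
    simpa using (hasDerivAt_pow 2 y).const_mul b
  rw [hsq.exp.deriv]
  ring

theorem iteratedDeriv_two_exp_mul_sq_zero (b : ℝ) :
    iteratedDeriv 2 (fun y ↦ exp (b * y ^ 2)) 0 = 2 * b := by
  rw [iteratedDeriv_succ, iteratedDeriv_one, deriv_exp_mul_sq,
    deriv_fun_mul (by fun_prop) (by fun_prop)]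
  simp

section SincMulExp

variable (c b : ℝ)

theorem deriv_sinc_const_mul_zero : deriv (fun y ↦ sinc (c * y)) 0 = 0 := by
  simp [deriv_comp_mul_left, deriv_sinc_zero]

theorem iteratedDeriv_two_sinc_const_mul_zero :
    iteratedDeriv 2 (fun y ↦ sinc (c * y)) 0 = -c ^ 2 / 3 := by
  simp only [iteratedDeriv_comp_const_mul contDiff_sinc, mul_zero, iteratedDeriv_two_sinc_zero]
  ring

theorem contDiff_sinc_mul_exp {n : WithTop ℕ∞} :
    ContDiff ℝ n fun y ↦ sinc (c * y) * exp (b * y ^ 2) := by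
  fun_prop

theorem deriv_sinc_mul_exp_zero : deriv (fun y ↦ sinc (c * y) * exp (b * y ^ 2)) 0 = 0 := by
  have hsinc : Differentiable ℝ sinc := contDiff_sinc.differentiable_one
  rw [deriv_fun_mul (by fun_prop) (by fun_prop), deriv_sinc_const_mul_zero, deriv_exp_mul_sq]
  simp

theorem iteratedDeriv_two_sinc_mul_exp_zero :
    iteratedDeriv 2 (fun y ↦ sinc (c * y) * exp (b * y ^ 2)) 0 = 2 * b - c ^ 2 / 3 := by
  rw [iteratedDeriv_two_fun_mul_of_deriv_eq_zero (by fun_prop) (by fun_prop)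
    (deriv_sinc_const_mul_zero c), iteratedDeriv_two_exp_mul_sq_zero,
    iteratedDeriv_two_sinc_const_mul_zero, mul_zero, sinc_zero, zero_pow two_ne_zero, mul_zero,
    exp_zero]
  ring

end SincMulExp

theorem rsk_eq_sinc_mul_exp {h : ℝ} (hh : h ≠ 0) (σ : ℝ) :
    rsk h σ = fun y ↦ sinc (π / h * y) * exp (-(1 / (2 * σ ^ 2)) * y ^ 2) := by
  ext y
  obtain rfl | hy := eq_or_ne y 0
  · simp [rsk]
  · have hne : π / h * y ≠ 0 := mul_ne_zero (div_ne_zero pi_ne_zero hh) hy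
    simp only [rsk, if_neg hy, sinc_of_ne_zero hne]
    ring_nf

/-- For `h > 0` and `σ > 0`, the RSK is twice differentiable at `0` with
`δ'(0) = 0` and `δ''(0) = -(3 + (π²/h²)·σ²)/(3σ²)`. -/
theorem stmt_2 (h σ : ℝ) (hh : 0 < h) (hσ : 0 < σ) :
    HasDerivAt (rsk h σ) 0 0 ∧
      HasDerivAt (deriv (rsk h σ))
        (-(3 + Real.pi ^ 2 / h ^ 2 * σ ^ 2) / (3 * σ ^ 2)) 0 := by
  rw [rsk_eq_sinc_mul_exp hh.ne']
  constructor
  · exact ((contDiff_sinc_mul_exp _ _).differentiable_one 0).hasDerivAt.congr_deriv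
      (deriv_sinc_mul_exp_zero _ _)
  · have hsmooth := contDiff_sinc_mul_exp (π / h) (-(1 / (2 * σ ^ 2))) (n := 2)
    refine (hasDerivAt_deriv_of_contDiffAt_two hsmooth.contDiffAt).congr_deriv ?_
    rw [iteratedDeriv_two_sinc_mul_exp_zero]
    field_simp
    ring
end

section
/- For every natural number n, the function Φ_n(x) = He_n(√2·x)·exp(−x²/2), where He_n is the n-th probabilist's Hermite polynomial (defined by He_0 = 1 and He_{n+1}(x) = x·He_n(x) − He_n'(x)), satisfies the quantum harmonic oscillator eigenvalue equation −(1/2)·Φ_n''(x) + (x²/2)·Φ_n(x) = (n + 1/2)·Φ_n(x) for all x ∈ ℝ. -/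
open Real Polynomial

/-- The `n`-th Hermite function `Φ_n(x) = He_n(√2·x)·exp(-x²/2)`, where `He_n` is the
probabilist's Hermite polynomial (`Polynomial.hermite`, satisfying `He_0 = 1` and
`He_{n+1}(x) = x·He_n(x) - He_n'(x)`). -/
noncomputable def hermiteFun (n : ℕ) : ℝ → ℝ := fun x =>
  Polynomial.aeval (Real.sqrt 2 * x) (Polynomial.hermite n) * Real.exp (-(x ^ 2) / 2)

/-! Ladder operators: with `Φ n = hermiteFun n`, the recurrence defining `He (n + 1)` reads
`(x - d/dx) Φ n = √2 Φ (n + 1)`, and `He (n + 1)' = (n + 1) He n` reads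
`(x + d/dx) Φ (n + 1) = √2 (n + 1) Φ n`. Hence
`(x + d/dx) (x - d/dx) Φ n = 2 (n + 1) Φ n`, while the left-hand operator is
`x ^ 2 - d²/dx² + 1`. -/

theorem derivative_hermite_succ (n : ℕ) :
    derivative (hermite (n + 1)) = ((n : ℤ[X]) + 1) * hermite n := by
  induction n with
  | zero => simp
  | succ n ih =>
    calc derivative (hermite (n + 2))
        = hermite (n + 1) + X * derivative (hermite (n + 1))
            - derivative (derivative (hermite (n + 1))) := by
          rw [hermite_succ (n + 1), derivative_sub, derivative_mul, derivative_X, one_mul]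
      _ = hermite (n + 1) + ((n : ℤ[X]) + 1) * (X * hermite n - derivative (hermite n)) := by
          rw [ih, ← Nat.cast_succ, derivative_natCast_mul]
          ring
      _ = (((n + 1 : ℕ) : ℤ[X]) + 1) * hermite (n + 1) := by
          rw [← hermite_succ]
          push_cast
          ring

theorem hasDerivAt_aeval_const_mul {R 𝕜 : Type*} [CommSemiring R] [NontriviallyNormedField 𝕜]
    [Algebra R 𝕜] (p : R[X]) (c x : 𝕜) :
    HasDerivAt (fun y => aeval (c * y) p) (c * aeval (c * x) (derivative p)) x := by
  refine ((p.hasDerivAt_aeval (c * x)).comp x ((hasDerivAt_id' x).const_mul c)).congr_deriv ?_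
  rw [mul_one, mul_comm]

theorem hasDerivAt_exp_neg_sq_div_two (x : ℝ) :
    HasDerivAt (fun y => exp (-(y ^ 2) / 2)) (-x * exp (-(x ^ 2) / 2)) x := by
  refine ((hasDerivAt_pow 2 x).fun_neg.div_const 2).exp.congr_deriv ?_
  push_cast
  ring

theorem hasDerivAt_hermiteFun (n : ℕ) (x : ℝ) :
    HasDerivAt (hermiteFun n)
      (√2 * aeval (√2 * x) (derivative (hermite n)) * exp (-(x ^ 2) / 2) - x * hermiteFun n x)
      x := by
  refine ((hasDerivAt_aeval_const_mul (hermite n) (√2) x).mul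
    (hasDerivAt_exp_neg_sq_div_two x)).congr_deriv ?_
  rw [hermiteFun]
  ring

theorem hasDerivAt_hermiteFun_raising (n : ℕ) (x : ℝ) :
    HasDerivAt (hermiteFun n) (x * hermiteFun n x - √2 * hermiteFun (n + 1) x) x := by
  refine (hasDerivAt_hermiteFun n x).congr_deriv ?_
  simp only [hermiteFun, hermite_succ, map_sub, map_mul, aeval_X]
  linear_combination
    x * aeval (√2 * x) (hermite n) * exp (-(x ^ 2) / 2) * mul_self_sqrt zero_le_two

theorem hasDerivAt_hermiteFun_lowering (n : ℕ) (x : ℝ) :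
    HasDerivAt (hermiteFun (n + 1))
      (√2 * (n + 1) * hermiteFun n x - x * hermiteFun (n + 1) x) x := by
  refine (hasDerivAt_hermiteFun (n + 1) x).congr_deriv ?_
  simp only [hermiteFun, derivative_hermite_succ, map_mul, map_add, map_natCast, map_one]
  ring

theorem hasDerivAt_deriv_hermiteFun (n : ℕ) (x : ℝ) :
    HasDerivAt (deriv (hermiteFun n)) ((x ^ 2 - (2 * n + 1)) * hermiteFun n x) x := by
  have deriv_eq : deriv (hermiteFun n) =
      fun y => y * hermiteFun n y - √2 * hermiteFun (n + 1) y :=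
    funext fun y => (hasDerivAt_hermiteFun_raising n y).deriv
  rw [deriv_eq]
  refine (((hasDerivAt_id' x).fun_mul (hasDerivAt_hermiteFun_raising n x)).fun_sub
    ((hasDerivAt_hermiteFun_lowering n x).const_mul (√2))).congr_deriv ?_
  linear_combination -(n + 1) * hermiteFun n x * mul_self_sqrt zero_le_two

/-- The Hermite functions satisfy the quantum harmonic oscillator eigenvalue equation
`-(1/2)·Φ_n'' + (x²/2)·Φ_n = (n + 1/2)·Φ_n`. -/
theorem stmt_15 (n : ℕ) (x : ℝ) :
    -(1 / 2) * deriv (deriv (hermiteFun n)) x + x ^ 2 / 2 * hermiteFun n x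
      = ((n : ℝ) + 1 / 2) * hermiteFun n x := by
  rw [(hasDerivAt_deriv_hermiteFun n x).deriv]
  ring
end
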